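/- For each prime p, the set of maximal ideals of the ring of algebraic integers Z̄ containing p, topologized as a subspace of 2^Z̄ with the product topology, is homeomorphic to the Cantor space 2^ℕ. -/

import Mathlib

/-- The ring of algebraic integers: the integral closure of ℤ in an algebraic closure of ℚ. -/
def Zbar : Type := integralClosure ℤ (AlgebraicClosure ℚ)

noncomputable instance : CommRing Zbar :=
  inferInstanceAs (CommRing (integralClosure ℤ (AlgebraicClosure ℚ)))

section SplittingTree

variable {X : Type*} (c : ℕ → X → Bool)

/-- The least index of a function in the family `c` that is not constant on `D`. -/
noncomputable def splitIndex (D : Set X) : ℕ :=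
  sInf {n | ∃ x ∈ D, ∃ y ∈ D, c n x ≠ c n y}

/-- The cell reached by the (reversed) sequence of answers `l`, where each cell is cut into two by
the first function that is not constant on it. -/
noncomputable def splitCell : List Bool → Set X
  | [] => Set.univ
  | b :: l => {y ∈ splitCell l | c (splitIndex c (splitCell l)) y = b}

/-- The (reversed) list of the first `n` answers given by the point `x`. -/
noncomputable def splitPath (x : X) : ℕ → List Bool
  | 0 => []
  | n + 1 => c (splitIndex c (splitCell c (splitPath x n))) x :: splitPath x n

/-- The infinite branch of the splitting tree followed by the point `x`. -/
noncomputable def splitBranch (x : X) (n : ℕ) : Bool :=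
  c (splitIndex c (splitCell c (splitPath c x n))) x

variable {c}

theorem splitCell_cons_subset (b : Bool) (l : List Bool) :
    splitCell c (b :: l) ⊆ splitCell c l := fun _ h => h.1

theorem mem_splitCell_splitPath (x : X) (n : ℕ) : x ∈ splitCell c (splitPath c x n) := by
  induction n with
  | zero => trivial
  | succ n ih => exact ⟨ih, rfl⟩

theorem eq_of_mem_splitCell {l : List Bool} {n : ℕ} (hn : n < l.length) {x y : X}
    (hx : x ∈ splitCell c l) (hy : y ∈ splitCell c l)
    (hsplit : ∀ l, ∃ n, ∃ x ∈ splitCell c l, ∃ y ∈ splitCell c l, c n x ≠ c n y) :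
    c n x = c n y := by
  have below {l : List Bool} {n : ℕ} (hn : n < splitIndex c (splitCell c l)) {x y : X}
      (hx : x ∈ splitCell c l) (hy : y ∈ splitCell c l) : c n x = c n y := by
    by_contra h
    exact Nat.notMem_of_lt_sInf hn ⟨x, hx, y, hy, h⟩
  have le_index (l : List Bool) : l.length ≤ splitIndex c (splitCell c l) := by
    induction l with
    | nil => exact Nat.zero_le _
    | cons b l ih =>
      obtain ⟨x, hx, y, hy, hxy⟩ := Nat.sInf_mem (hsplit (b :: l))
      change c (splitIndex c (splitCell c (b :: l))) x ≠
        c (splitIndex c (splitCell c (b :: l))) y at hxy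
      by_contra! hlt
      rw [List.length_cons] at hlt
      rcases (Nat.lt_succ_iff.mp hlt |>.trans ih).lt_or_eq with h | h
      · exact hxy (below h hx.1 hy.1)
      · rw [h] at hxy
        exact hxy (hx.2.trans hy.2.symm)
  exact below (hn.trans_le (le_index l)) hx hy

theorem nonempty_splitCell [Nonempty X]
    (hsplit : ∀ l, (splitCell c l).Nonempty →
      ∃ n, ∃ x ∈ splitCell c l, ∃ y ∈ splitCell c l, c n x ≠ c n y) (l : List Bool) :
    (splitCell c l).Nonempty := by
  induction l with
  | nil => exact Set.univ_nonempty
  | cons b l ih =>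
    obtain ⟨x, hx, y, hy, hxy⟩ := Nat.sInf_mem (hsplit l ih)
    change c (splitIndex c (splitCell c l)) x ≠ c (splitIndex c (splitCell c l)) y at hxy
    by_cases h : c (splitIndex c (splitCell c l)) x = b
    · exact ⟨x, hx, h⟩
    · exact ⟨y, hy, (Bool.eq_not_of_ne hxy.symm).trans (Bool.eq_not_of_ne (Ne.symm h)).symm⟩

theorem splitBranch_injective
    (hsplit : ∀ l, ∃ n, ∃ x ∈ splitCell c l, ∃ y ∈ splitCell c l, c n x ≠ c n y)
    (hsep : ∀ x y, (∀ n, c n x = c n y) → x = y) :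
    Function.Injective (splitBranch c) := by
  intro x y hxy
  have path (n : ℕ) : splitPath c x n = splitPath c y n := by
    induction n with
    | zero => rfl
    | succ n ih => exact congrArg₂ List.cons (congrFun hxy n) ih
  have length (n : ℕ) : (splitPath c x n).length = n := by
    induction n with
    | zero => rfl
    | succ n ih => simp [splitPath, ih]
  refine hsep x y fun n => eq_of_mem_splitCell (l := splitPath c x (n + 1)) ?_
    (mem_splitCell_splitPath x _) ?_ hsplit
  · rw [length]; exact n.lt_succ_self
  · rw [path]; exact mem_splitCell_splitPath y _

variable [TopologicalSpace X]

theorem isClopen_splitCell (hc : ∀ n, Continuous (c n)) (l : List Bool) :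
    IsClopen (splitCell c l) := by
  induction l with
  | nil => exact isClopen_univ
  | cons b l ih => exact ih.inter ((isClopen_discrete {b}).preimage (hc _))

theorem continuous_splitBranch (hc : ∀ n, Continuous (c n)) : Continuous (splitBranch c) := by
  have hc' (n : ℕ) (x : X) : ∀ᶠ y in nhds x, c n y = c n x :=
    (hc n).continuousAt.eventually (eventually_nhds_iff.mpr
      ⟨{c n x}, fun _ h => h, isOpen_discrete _, rfl⟩)
  have path (x : X) (n : ℕ) : ∀ᶠ y in nhds x, splitPath c y n = splitPath c x n := by
    induction n with
    | zero => exact Filter.Eventually.of_forall fun _ => rfl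
    | succ n ih =>
      filter_upwards [ih, hc' (splitIndex c (splitCell c (splitPath c x n))) x] with y h₁ h₂
      simp only [splitPath, h₁, h₂]
  refine continuous_pi fun n => IsLocallyConstant.continuous
    ((IsLocallyConstant.iff_eventually_eq _).mpr fun x => ?_)
  filter_upwards [path x n, hc' (splitIndex c (splitCell c (splitPath c x n))) x] with y h₁ h₂
  simp only [splitBranch, h₁, h₂]

theorem splitBranch_surjective [CompactSpace X] [Nonempty X] (hc : ∀ n, Continuous (c n))
    (hsplit : ∀ l, ∃ n, ∃ x ∈ splitCell c l, ∃ y ∈ splitCell c l, c n x ≠ c n y) :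
    Function.Surjective (splitBranch c) := by
  intro b
  obtain ⟨x, hx⟩ := IsCompact.nonempty_iInter_of_sequence_nonempty_isCompact_isClosed
    (fun n => splitCell c (PiNat.res b n)) (fun n => splitCell_cons_subset _ _)
    (fun n => nonempty_splitCell (fun l _ => hsplit l) _) (isClopen_splitCell hc _).isClosed.isCompact
    (fun n => (isClopen_splitCell hc _).isClosed)
  rw [Set.mem_iInter] at hx
  have path (n : ℕ) : splitPath c x n = PiNat.res b n := by
    induction n with
    | zero => rfl
    | succ n ih =>
      rw [splitPath, ih, PiNat.res_succ]
      exact congrArg (· :: _) (hx (n + 1)).2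
  refine ⟨x, funext fun n => ?_⟩
  rw [splitBranch, path]
  exact (hx (n + 1)).2

/-- Brouwer's characterization of the Cantor space: a nonempty compact space without isolated
points whose points are separated by countably many clopen sets is homeomorphic to `2 ^ ℕ`. -/
theorem nonempty_homeomorph_cantor [CompactSpace X] [Nonempty X] (hc : ∀ n, Continuous (c n))
    (hsep : ∀ x y, (∀ n, c n x = c n y) → x = y)
    (hperf : ∀ U : Set X, IsOpen U → U.Nonempty → U.Nontrivial) :
    Nonempty (X ≃ₜ (ℕ → Bool)) := by
  have split {D : Set X} (hD : IsOpen D) (hne : D.Nonempty) :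
      ∃ n, ∃ x ∈ D, ∃ y ∈ D, c n x ≠ c n y := by
    obtain ⟨x, hx, y, hy, hxy⟩ := hperf D hD hne
    by_contra! h
    exact hxy (hsep x y fun n => h n x hx y hy)
  have hsplit (l : List Bool) :=
    split (isClopen_splitCell hc l).isOpen
      (nonempty_splitCell (fun l h => split (isClopen_splitCell hc l).isOpen h) l)
  exact ⟨(isHomeomorph_iff_continuous_bijective.mpr
    ⟨continuous_splitBranch hc, splitBranch_injective hsplit hsep,
      splitBranch_surjective hc hsplit⟩).homeomorph⟩

end SplittingTree

open IntermediateField in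
/-- Only finitely many rational primes become squares in a given number field. -/
theorem finite_setOf_prime_isSquare (K : Type*) [Field K] [Algebra ℚ K] [FiniteDimensional ℚ K] :
    {q : ℕ | q.Prime ∧ IsSquare (q : K)}.Finite := by
  have : Finite (IntermediateField ℚ K) :=
    (Field.exists_primitive_element_iff_finite_intermediateField ℚ K).mp
      ⟨inferInstance, Field.exists_primitive_element ℚ K⟩
  have : CharZero K := algebraRat.charZero K
  have not_rat {q : ℕ} (hq : q.Prime) (r : ℚ) : r * r ≠ q := fun h =>
    hq.prime.not_isSquare (Rat.isSquare_natCast_iff.mp ⟨r, h.symm⟩)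
  have coords {s x : K} {q : ℕ} (hs : (q : K) = s * s) (hx : x ∈ ℚ⟮s⟯) :
      ∃ a b : ℚ, x = a + b * s := by
    rw [← mem_toSubalgebra, adjoin_simple_toSubalgebra_of_isAlgebraic
      (Algebra.IsAlgebraic.isAlgebraic s)] at hx
    induction hx using Algebra.adjoin_induction with
    | mem x hx => exact ⟨0, 1, by simp [Set.mem_singleton_iff.mp hx]⟩
    | algebraMap r => exact ⟨r, 0, by simp⟩
    | add x y _ _ hx hy =>
      obtain ⟨a, b, rfl⟩ := hx
      obtain ⟨a', b', rfl⟩ := hy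
      exact ⟨a + a', b + b', by push_cast; ring⟩
    | mul x y _ _ hx hy =>
      obtain ⟨a, b, rfl⟩ := hx
      obtain ⟨a', b', rfl⟩ := hy
      exact ⟨a * a' + b * b' * q, a * b' + b * a', by push_cast; rw [hs]; ring⟩
  have key : ∀ q ∈ {q : ℕ | q.Prime ∧ IsSquare (q : K)}, ∃ s : K, (q : K) = s * s := fun _ h => h.2
  choose! s hs using key
  refine Set.Finite.of_finite_image (f := fun q => ℚ⟮s q⟯) (Set.toFinite _) ?_
  intro q hq q' hq' (hqq' : ℚ⟮s q⟯ = ℚ⟮s q'⟯)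
  obtain ⟨a, b, hab⟩ := coords (hs q hq) (hqq' ▸ mem_adjoin_simple_self ℚ (s q'))
  have hsq : (q' : K) = (a ^ 2 + b ^ 2 * q : ℚ) + (2 * a * b : ℚ) * s q := by
    rw [hs q' hq', hab]
    push_cast
    rw [hs q hq]
    ring
  have hzero : 2 * a * b = 0 := by
    by_contra hne
    have hne' : ((2 * a * b : ℚ) : K) ≠ 0 := by exact_mod_cast hne
    have hsr : s q = (((q' - (a ^ 2 + b ^ 2 * q)) / (2 * a * b) : ℚ) : K) := by
      rw [Rat.cast_div, eq_div_iff hne', Rat.cast_sub, Rat.cast_natCast, hsq]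
      ring
    refine not_rat hq.1 ((q' - (a ^ 2 + b ^ 2 * q)) / (2 * a * b)) ?_
    have := hs q hq
    rw [hsr] at this
    exact_mod_cast this.symm
  rw [hzero, Rat.cast_zero, zero_mul, add_zero] at hsq
  have hsq' : (q' : ℚ) = a ^ 2 + b ^ 2 * q := by exact_mod_cast hsq
  rcases mul_eq_zero.mp hzero with ha | hb
  · have ha : a = 0 := by simpa using ha
    have hprod : IsSquare (q * q') := Rat.isSquare_natCast_iff.mp
      ⟨b * q, by push_cast; rw [hsq', ha]; ring⟩
    by_contra hne
    obtain ⟨r, hr⟩ := hprod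
    have hdvd : q ∣ r := or_self_iff.mp (hq.1.dvd_mul.mp (hr ▸ dvd_mul_right q q'))
    obtain ⟨t, rfl⟩ := hdvd
    have : q ∣ q' := ⟨t * t, Nat.eq_of_mul_eq_mul_left hq.1.pos (by rw [hr]; ring)⟩
    exact hne ((Nat.prime_dvd_prime_iff_eq hq.1 hq'.1).mp this)
  · exact absurd (by rw [hsq', hb]; ring) (not_rat hq'.1 a)

section AlgebraicClosure

variable {L : Type*} [Field L] [Algebra ℚ L] [IsAlgClosure ℚ L]

/-- Given finitely many algebraic numbers and infinitely many primes, some automorphism fixes those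
numbers and flips the sign of a square root of one of the primes. -/
theorem exists_algEquiv_sqrt_eq_neg {F : Set L} (hF : F.Finite) {P : Set ℕ} (hP : P.Infinite)
    (hprime : ∀ q ∈ P, q.Prime) :
    ∃ q ∈ P, ∃ s : L, s * s = q ∧ ∃ σ : L ≃ₐ[ℚ] L, (∀ x ∈ F, σ x = x) ∧ σ s = -s := by
  have : IsAlgClosed L := IsAlgClosure.isAlgClosed ℚ
  have : Algebra.IsAlgebraic ℚ L := IsAlgClosure.isAlgebraic
  have : Normal ℚ L := IsAlgClosure.normal ℚ L
  have : IsGalois ℚ L := IsGalois.mk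
  have : Finite F := hF
  let K := IntermediateField.adjoin ℚ F
  have hK : @FiniteDimensional ℚ K _ _ K.algebra'.toModule :=
    IntermediateField.finiteDimensional_adjoin fun x _ => Algebra.IsIntegral.isIntegral x
  obtain ⟨q, hqP, hq⟩ := (hP.sdiff (@finite_setOf_prime_isSquare K _ K.algebra' hK)).nonempty
  obtain ⟨s, hs⟩ := IsAlgClosed.exists_pow_nat_eq (q : L) two_pos
  rw [sq] at hs
  refine ⟨q, hqP, s, hs, ?_⟩
  have hsK : s ∉ K := fun h => hq ⟨hprime q hqP, ⟨s, h⟩, Subtype.ext (by simpa using hs.symm)⟩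
  rw [← InfiniteGalois.fixedField_fixingSubgroup K, IntermediateField.mem_fixedField_iff] at hsK
  push Not at hsK
  obtain ⟨σ, hσ, hσs⟩ := hsK
  refine ⟨σ, fun x hx => (IntermediateField.mem_fixingSubgroup_iff K σ).mp hσ x
    (IntermediateField.subset_adjoin ℚ F hx), ?_⟩
  have : σ s * σ s = s * s := by rw [← map_mul, hs, map_natCast]
  exact (mul_self_eq_mul_self_iff.mp this).resolve_left hσs

/-- The maximal ideals above `p` in the ring of algebraic integers are not determined by finitely
many membership conditions. -/
theorem exists_isMaximal_ne_of_finite [Algebra ℤ L] {p : ℕ} (hp : p.Prime)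
    (M : Ideal (integralClosure ℤ L)) [hM : M.IsMaximal] (hpM : (p : integralClosure ℤ L) ∈ M)
    {F : Set (integralClosure ℤ L)} (hF : F.Finite) :
    ∃ M' : Ideal (integralClosure ℤ L), M'.IsMaximal ∧ (p : integralClosure ℤ L) ∈ M' ∧
      (∀ a ∈ F, a ∈ M' ↔ a ∈ M) ∧ M' ≠ M := by
  have : CharZero L := algebraRat.charZero L
  obtain ⟨q, ⟨hq, hqp⟩, s, hs, σ, hσF, hσs⟩ := exists_algEquiv_sqrt_eq_neg (L := L)
    (hF.image Subtype.val) (Nat.infinite_setOfPred_prime_modEq_one (k := 4 * p)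
      (mul_ne_zero four_ne_zero hp.ne_zero)) fun _ h => h.1
  obtain ⟨k, hk⟩ := (Nat.modEq_iff_dvd' hq.one_lt.le).mp hqp.symm
  have hqk : (q : L) = 1 + 4 * p * k := by
    have : q = 1 + 4 * p * k := by have := hq.one_lt; omega
    rw [this]
    push_cast
    rfl
  have hαβ : (1 + s) / 2 * ((1 - s) / 2) = -(p * k : L) := by
    linear_combination (-1 / 4 : L) * hs + (-1 / 4 : L) * hqk
  have hint : IsIntegral ℤ ((1 + s) / 2) := by
    refine ⟨.X ^ 2 - .X - .C (p * k : ℤ), by monicity!, ?_⟩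
    rw [Polynomial.eval₂_sub, Polynomial.eval₂_sub, Polynomial.eval₂_X_pow, Polynomial.eval₂_X,
      Polynomial.eval₂_C, map_mul, map_natCast, map_natCast]
    linear_combination -hαβ
  let τ : integralClosure ℤ L ≃ₐ[ℤ] integralClosure ℤ L :=
    AlgEquiv.mapIntegralClosure (AlgEquiv.ofRingEquiv (f := σ.toRingEquiv) fun r => by simp)
  have hτ (a : integralClosure ℤ L) : (τ a : L) = σ a := rfl
  let α : integralClosure ℤ L := ⟨(1 + s) / 2, hint⟩
  have hτα : τ α = 1 - α := by
    refine Subtype.ext ?_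
    change σ ((1 + s) / 2) = 1 - (1 + s) / 2
    rw [map_div₀, map_add, map_one, map_ofNat, hσs]
    ring
  have hα : α * (1 - α) = -(p * k) := by
    refine Subtype.ext ?_
    push_cast
    rw [← hαβ]
    change (1 + s) / 2 * (1 - (1 + s) / 2) = _
    ring
  refine ⟨M.comap τ, Ideal.comap_isMaximal_of_equiv τ, ?_, fun a ha => ?_, fun h => ?_⟩
  · rw [Ideal.mem_comap, map_natCast]
    exact hpM
  · rw [Ideal.mem_comap, show τ a = a from Subtype.ext (hσF _ ⟨a, ha, rfl⟩)]
  · have hiff : 1 - α ∈ M ↔ α ∈ M := by rw [← hτα, ← Ideal.mem_comap, h]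
    have hmem : α ∈ M ∨ 1 - α ∈ M := hM.isPrime.mem_or_mem (hα ▸ M.neg_mem (M.mul_mem_right _ hpM))
    have hboth : α ∈ M ∧ 1 - α ∈ M := by tauto
    refine hM.ne_top ((Ideal.eq_top_iff_one M).mpr ?_)
    simpa using M.add_mem hboth.1 hboth.2

end AlgebraicClosure

section MaximalSpectrum

theorem countable_Zbar : Countable Zbar := by
  have h := Algebra.IsAlgebraic.cardinalMk_le_max ℤ (integralClosure ℤ (AlgebraicClosure ℚ))
  rw [Cardinal.mk_int, max_self] at h
  exact Cardinal.mk_le_aleph0_iff.mp h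

theorem isMaximal_of_isPrime_of_natCast_mem {R : Type*} [CommRing R] [Algebra.IsIntegral ℤ R]
    {p : ℕ} (hp : p.Prime) (I : Ideal R) [I.IsPrime] (hpI : (p : R) ∈ I) : I.IsMaximal := by
  refine Ideal.isMaximal_of_isIntegral_of_isMaximal_comap (R := ℤ) I ?_
  refine Ideal.IsPrime.isMaximal inferInstance fun h => ?_
  have hmem : (p : ℤ) ∈ I.comap (algebraMap ℤ R) := by simpa using hpI
  rw [h, Ideal.mem_bot] at hmem
  exact hp.ne_zero (by exact_mod_cast hmem)

theorem exists_isMaximal_natCast_mem {R : Type*} [CommRing R] [Algebra.IsIntegral ℤ R]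
    [CharZero R] {p : ℕ} (hp : p.Prime) : ∃ M : Ideal R, M.IsMaximal ∧ (p : R) ∈ M := by
  have : (Ideal.span {(p : ℤ)}).IsMaximal :=
    PrincipalIdealRing.isMaximal_of_irreducible (Nat.prime_iff_prime_int.mp hp).irreducible
  have hinj : Function.Injective (algebraMap ℤ R) := Int.cast_injective
  obtain ⟨M, hM, hcomap⟩ := Ideal.exists_ideal_over_maximal_of_isIntegral (S := R)
    (Ideal.span {(p : ℤ)}) (((RingHom.injective_iff_ker_eq_bot _).mp hinj).trans_le bot_le)
  refine ⟨M, hM, ?_⟩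
  have hmem : (p : ℤ) ∈ M.comap (algebraMap ℤ R) := hcomap ▸ Ideal.mem_span_singleton_self _
  simpa using hmem

instance : Algebra.IsIntegral ℤ Zbar :=
  inferInstanceAs (Algebra.IsIntegral ℤ (integralClosure ℤ (AlgebraicClosure ℚ)))

/-- The characteristic functions of the maximal ideals of `R` that contain `p`. -/
def maximalIdealsOver (R : Type*) [CommRing R] (p : ℕ) : Set (R → Bool) :=
  {f | ∃ M : Ideal R, M.IsMaximal ∧ (p : R) ∈ M ∧ ∀ a : R, f a = true ↔ a ∈ M}

theorem mem_maximalIdealsOver_iff {R : Type*} [CommRing R] [Algebra.IsIntegral ℤ R] {p : ℕ}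
    (hp : p.Prime) {f : R → Bool} :
    f ∈ maximalIdealsOver R p ↔ f p = true ∧ f 1 = false ∧
      (∀ a b, f a = true → f b = true → f (a + b) = true) ∧
      (∀ a b, f b = true → f (a * b) = true) ∧
      (∀ a b, f (a * b) = true → f a = true ∨ f b = true) := by
  constructor
  · rintro ⟨M, hM, hpM, hf⟩
    simp only [← Bool.not_eq_true, hf]
    exact ⟨hpM, (Ideal.ne_top_iff_one M).mp hM.ne_top, fun _ _ => M.add_mem,
      fun a _ => M.mul_mem_left a, fun _ _ => hM.isPrime.mem_or_mem⟩
  · rintro ⟨hfp, hf₁, hadd, hmul, hprime⟩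
    let M : Ideal R :=
      { carrier := {a | f a = true}
        add_mem' := fun ha hb => hadd _ _ ha hb
        zero_mem' := by simpa using hmul 0 p hfp
        smul_mem' := fun a b hb => hmul a b hb }
    have hM : M.IsPrime := ⟨(Ideal.ne_top_iff_one M).mpr fun h => by
      simp [show f 1 = true from h] at hf₁, fun h => hprime _ _ h⟩
    exact ⟨M, isMaximal_of_isPrime_of_natCast_mem hp M hfp, hfp, fun _ => Iff.rfl⟩

theorem isClosed_maximalIdealsOver {R : Type*} [CommRing R] [Algebra.IsIntegral ℤ R] {p : ℕ}
    (hp : p.Prime) : IsClosed (maximalIdealsOver R p) := by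
  have heval (a : R) : IsClopen {f : R → Bool | f a = true} :=
    (isClopen_discrete {true}).preimage (continuous_apply a)
  have hset : maximalIdealsOver R p = {f | f p = true ∧ f 1 = false ∧
      (∀ a b, f a = true → f b = true → f (a + b) = true) ∧
      (∀ a b, f b = true → f (a * b) = true) ∧
      (∀ a b, f (a * b) = true → f a = true ∨ f b = true)} :=
    Set.ext fun _ => mem_maximalIdealsOver_iff hp
  rw [hset]
  refine (heval _).isClosed.and (.and ?_ (.and ?_ (.and ?_ ?_)))
  · exact isClosed_eq (continuous_apply (1 : R)) continuous_const
  · simp only [Set.ofPred_forall]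
    exact isClosed_iInter fun a => isClosed_iInter fun b =>
      isClosed_imp (heval a).isOpen (isClosed_imp (heval b).isOpen (heval _).isClosed)
  · simp only [Set.ofPred_forall]
    exact isClosed_iInter fun a => isClosed_iInter fun b =>
      isClosed_imp (heval b).isOpen (heval _).isClosed
  · simp only [Set.ofPred_forall]
    exact isClosed_iInter fun a => isClosed_iInter fun b =>
      isClosed_imp (heval _).isOpen ((heval a).isClosed.union (heval b).isClosed)

theorem exists_isMaximal_ne_of_finite_Zbar {p : ℕ} (hp : p.Prime) (M : Ideal Zbar)
    (hM : M.IsMaximal) (hpM : (p : Zbar) ∈ M) {F : Set Zbar} (hF : F.Finite) :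
    ∃ M' : Ideal Zbar, M'.IsMaximal ∧ (p : Zbar) ∈ M' ∧ (∀ a ∈ F, a ∈ M' ↔ a ∈ M) ∧ M' ≠ M :=
  @exists_isMaximal_ne_of_finite (AlgebraicClosure ℚ) _ (AlgebraicClosure.instAlgebra ℚ)
    inferInstance _ p hp M hM hpM F hF

theorem nontrivial_of_isOpen_maximalIdealsOver {p : ℕ} (hp : p.Prime)
    {U : Set (maximalIdealsOver Zbar p)} (hU : IsOpen U) (hne : U.Nonempty) : U.Nontrivial := by
  classical
  obtain ⟨V, hV, rfl⟩ := isOpen_induced_iff.mp hU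
  obtain ⟨⟨f, hf⟩, hfV⟩ := hne
  obtain ⟨F, u, hu, hFV⟩ := isOpen_pi_iff.mp hV f hfV
  obtain ⟨M, hM, hpM, hfM⟩ := id hf
  obtain ⟨M', hM', hpM', hF, hne⟩ := exists_isMaximal_ne_of_finite_Zbar hp M hM hpM F.finite_toSet
  let g : Zbar → Bool := fun a => decide (a ∈ M')
  have hg (a : Zbar) : g a = true ↔ a ∈ M' := decide_eq_true_iff
  refine ⟨⟨f, hf⟩, hfV, ⟨g, M', hM', hpM', hg⟩, hFV fun a ha => ?_, fun h => hne ?_⟩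
  · have : g a = f a := Bool.eq_iff_iff.mpr (((hg a).trans (hF a ha)).trans (hfM a).symm)
    change g a ∈ u a
    exact this ▸ (hu a ha).2
  · have hfg : f = g := congrArg Subtype.val h
    exact Ideal.ext fun a => (hg a).symm.trans (hfg ▸ hfM a)

end MaximalSpectrum

/-- For each prime `p`, the space of maximal ideals of the ring of algebraic integers
containing `p`, topologized as a subspace of the Cantor cube `Bool ^ Zbar` via characteristic
functions, is homeomorphic to the Cantor space `2 ^ ℕ`. -/
theorem maximalIdeals_homeomorph_cantor (p : ℕ) (hp : p.Prime) :
    Nonempty (({f : Zbar → Bool |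
      ∃ M : Ideal Zbar, M.IsMaximal ∧ (p : Zbar) ∈ M ∧ ∀ a : Zbar, f a = true ↔ a ∈ M} :
        Set (Zbar → Bool)) ≃ₜ (ℕ → Bool)) := by
  classical
  change Nonempty (maximalIdealsOver Zbar p ≃ₜ (ℕ → Bool))
  have : Countable Zbar := countable_Zbar
  have : CompactSpace (maximalIdealsOver Zbar p) :=
    isCompact_iff_compactSpace.mp (isClosed_maximalIdealsOver hp).isCompact
  have : CharZero Zbar :=
    inferInstanceAs (CharZero (integralClosure ℤ (AlgebraicClosure ℚ)))
  obtain ⟨M, hM, hpM⟩ := exists_isMaximal_natCast_mem (R := Zbar) hp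
  have : Nonempty (maximalIdealsOver Zbar p) :=
    ⟨fun a => decide (a ∈ M), M, hM, hpM, fun _ => decide_eq_true_iff⟩
  obtain ⟨e, he⟩ := exists_surjective_nat Zbar
  refine nonempty_homeomorph_cantor (c := fun n f => f.1 (e n))
    (fun n => (continuous_apply _).comp continuous_subtype_val)
    (fun f g h => Subtype.ext (funext (he.forall.mpr h)))
    fun U hU hne => nontrivial_of_isOpen_maximalIdealsOver hp hU hne
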